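/- arXiv:1605.06460 — 2 statements merged into one kernel-verified Lean document; each statement's English description precedes it below -/
import Mathlib

section
/- Let (E,ℒ,ℬ) be a labelled space, let α be a nonempty finite labelled path and β,γ ∈ ℒ*(E) be such that αβγ is a labelled path. Then (i) X_{(αβ)γ} ⊆ X_{(β)γ}; (ii) g_{(β)γ}(X_{(αβ)γ}) ⊆ X_{(α)βγ}; (iii) g_{(αβ)γ}(F) = g_{(α)βγ}(g_{(β)γ}(F)) for every F ∈ X_{(αβ)γ}. -/
/-!
Everything rests on two facts. First, ranges shrink when a word is extended on the left:
`r(αβ) ⊆ r(β)` (`wr_append_subset`), since a path labelled `αβ` ends with a path labelled `β`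
having the same range. This makes `X_{(αβ)γ} ⊆ X_{(β)γ}` an instance of upward closure and makes
the successive intersections with `r(βγ)` and `r(αβγ)` collapse to the latter.

Second, an ultrafilter `F` in `ℬ_γ` with `R = r(βγ) ∈ F` restricts to an ultrafilter in `ℬ_{βγ}`
(`IsUltrafilterIn.restrict`). A filter `G` in `ℬ_{βγ}` containing the restriction generates by
upward closure a filter in `ℬ_γ` that contains `F`, hence equals `F`; so `G ⊆ F`, and as the
elements of `G` lie below `R`, each of them is its own intersection with `R`.
-/

open Set

/-- A filter in the sub-poset `P` of a powerset, ordered by inclusion, with least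
element `∅`: nonempty, upward-closed within `P`, downward-directed, not containing `∅`. -/
def IsFilterIn {V : Type*} (P F : Set (Set V)) : Prop :=
  F ⊆ P ∧ F.Nonempty ∧ ∅ ∉ F ∧
    (∀ X ∈ F, ∀ Y ∈ P, X ⊆ Y → Y ∈ F) ∧
    (∀ X ∈ F, ∀ Y ∈ F, ∃ Z ∈ F, Z ⊆ X ∧ Z ⊆ Y)

/-- An ultrafilter in `P` is a maximal filter in `P`. -/
def IsUltrafilterIn {V : Type*} (P F : Set (Set V)) : Prop :=
  IsFilterIn P F ∧ ∀ G : Set (Set V), IsFilterIn P G → F ⊆ G → G = F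

/-- A labelled graph: a directed graph with source, range and a surjective labelling map. -/
structure LGraph (V Edg A : Type*) where
  src : Edg → V
  rng : Edg → V
  lbl : Edg → A
  lbl_surj : Function.Surjective lbl

namespace LGraph

variable {V Edg A : Type*} (G : LGraph V Edg A)

/-- A finite path: a list of composable edges. -/
def IsPath (p : List Edg) : Prop := p.Chain' fun e f => G.rng e = G.src f

/-- The relative range `r(S, α)`, with the convention `r(S, ω) = S`. -/
def relR (S : Set V) : List A → Set V
  | [] => S
  | a :: w =>
      {v | ∃ p : List Edg, G.IsPath p ∧ p.map G.lbl = a :: w ∧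
        ∃ h : p ≠ [], G.src (p.head h) ∈ S ∧ G.rng (p.getLast h) = v}

/-- `α ∈ ℒ*(E)` : a finite labelled path (including the empty word). -/
def IsLbl (α : List A) : Prop := ∃ p : List Edg, G.IsPath p ∧ p.map G.lbl = α

/-- An infinite labelled path. -/
def IsLblInf (α : ℕ → A) : Prop :=
  ∃ p : ℕ → Edg, (∀ n, G.rng (p n) = G.src (p (n + 1))) ∧ ∀ n, G.lbl (p n) = α n

end LGraph

/-- A labelled space: a labelled graph together with an accommodating family `ℬ`. -/
structure LabelledSpace (V Edg A : Type*) extends LGraph V Edg A where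
  ℬ : Set (Set V)
  inter_mem : ∀ ⦃X Y : Set V⦄, X ∈ ℬ → Y ∈ ℬ → X ∩ Y ∈ ℬ
  union_mem : ∀ ⦃X Y : Set V⦄, X ∈ ℬ → Y ∈ ℬ → X ∪ Y ∈ ℬ
  range_mem : ∀ α : List A, α ≠ [] → toLGraph.IsLbl α → toLGraph.relR Set.univ α ∈ ℬ
  relR_mem : ∀ ⦃X : Set V⦄, X ∈ ℬ → ∀ α : List A, toLGraph.IsLbl α → toLGraph.relR X α ∈ ℬ

/-- Words of length `≤ ∞`: finite words are lists, infinite words are sequences. -/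
abbrev LWord (A : Type*) := List A ⊕ (ℕ → A)

/-- The length of a word in `ℕ∞`. -/
def wlen {A : Type*} : LWord A → ℕ∞
  | .inl l => (l.length : ℕ∞)
  | .inr _ => (⊤ : ℕ∞)

/-- `α_{1,n}` : the initial subword of length `n`. -/
def wtake {A : Type*} : LWord A → ℕ → List A
  | .inl l, n => l.take n
  | .inr f, n => (List.range n).map f

/-- Concatenation of a finite word with a word. -/
def wappend {A : Type*} (α : List A) : LWord A → LWord A
  | .inl l => .inl (α ++ l)
  | .inr f => .inr fun n => if h : n < α.length then α.get ⟨n, h⟩ else f (n - α.length)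

namespace LabelledSpace

variable {V Edg A : Type*} (L : LabelledSpace V Edg A)

abbrev relR : Set V → List A → Set V := L.toLGraph.relR

abbrev IsLbl : List A → Prop := L.toLGraph.IsLbl

/-- `r(α)` : the range of a word. -/
def wr (α : List A) : Set V := L.relR Set.univ α

/-- Membership in `ℒ^{≤∞}(E)`. -/
def IsLWord : LWord A → Prop
  | .inl l => L.IsLbl l
  | .inr f => L.toLGraph.IsLblInf f

/-- Weakly left-resolving. -/
def WeaklyLeftResolving : Prop :=
  ∀ ⦃X Y : Set V⦄, X ∈ L.ℬ → Y ∈ L.ℬ → ∀ α : List A, α ≠ [] →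
    L.relR (X ∩ Y) α = L.relR X α ∩ L.relR Y α

/-- `ℬ` is closed under relative complements. -/
def ClosedUnderRelComplements : Prop :=
  ∀ ⦃X Y : Set V⦄, X ∈ L.ℬ → Y ∈ L.ℬ → X \ Y ∈ L.ℬ

/-- `ℬ_α = {A ∈ ℬ : A ⊆ r(α)}`. -/
def Bw (α : List A) : Set (Set V) := {X | X ∈ L.ℬ ∧ X ⊆ L.wr α}

/-- `X_α` : the set of ultrafilters in `ℬ_α`. -/
def Xw (α : List A) : Set (Set (Set V)) := {F | IsUltrafilterIn (L.Bw α) F}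

/-- `X_{(α)β} = {F ∈ X_β : r(αβ) ∈ F}`, with the convention `X_{(ω)β} = X_β`. -/
def XP (α β : List A) : Set (Set (Set V)) :=
  match α with
  | [] => L.Xw β
  | a :: l => {F | F ∈ L.Xw β ∧ L.wr ((a :: l) ++ β) ∈ F}

/-- `g_{(α)β}(F) = {C ∩ r(αβ) : C ∈ F}`. -/
def gmap (α β : List A) (F : Set (Set V)) : Set (Set V) :=
  {D | ∃ C ∈ F, D = C ∩ L.wr (α ++ β)}

/-- `h_{[α]β}(F)` : the upward closure of `F` in `ℬ_β` (only depends on `β`). -/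
def hmap (β : List A) (F : Set (Set V)) : Set (Set V) :=
  {D | D ∈ L.Bw β ∧ ∃ C ∈ F, C ⊆ D}

/-- `f_{β[γ]}(F) = {A ∈ ℬ_β : r(A,γ) ∈ F}`. -/
def fmap (β γ : List A) (F : Set (Set V)) : Set (Set V) :=
  {X | X ∈ L.Bw β ∧ L.relR X γ ∈ F}

/-- `X_α^{sink}`. -/
def Xsink (α : List A) : Set (Set (Set V)) :=
  {F | F ∈ L.Xw α ∧ ∀ b : A, ∃ X ∈ F, L.relR X [b] = ∅}

/-- A complete family (of filters) for the word `w`. -/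
def IsCompleteFamily (w : LWord A) (F : ℕ → Set (Set V)) : Prop :=
  (∀ n : ℕ, 0 < n → (n : ℕ∞) ≤ wlen w → IsFilterIn (L.Bw (wtake w n)) (F n)) ∧
  (IsFilterIn (L.Bw []) (F 0) ∨ F 0 = ∅) ∧
  ∀ n : ℕ, (n : ℕ∞) < wlen w →
    F n = {X | X ∈ L.Bw (wtake w n) ∧ L.relR X ((wtake w (n + 1)).drop n) ∈ F (n + 1)}

/-- A complete family of ultrafilters for the word `w`. -/
def IsCompleteUltraFamily (w : LWord A) (F : ℕ → Set (Set V)) : Prop :=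
  (∀ n : ℕ, 0 < n → (n : ℕ∞) ≤ wlen w → IsUltrafilterIn (L.Bw (wtake w n)) (F n)) ∧
  (IsUltrafilterIn (L.Bw []) (F 0) ∨ F 0 = ∅) ∧
  ∀ n : ℕ, (n : ℕ∞) < wlen w →
    F n = {X | X ∈ L.Bw (wtake w n) ∧ L.relR X ((wtake w (n + 1)).drop n) ∈ F (n + 1)}

/-- Membership in `E(S)`: `none` is the zero element, `some (α, X)` stands for `(α, X, α)`. -/
def ESmem : Option (List A × Set V) → Prop
  | none => True
  | some p => p.2 ∈ L.Bw p.1 ∧ p.2 ≠ ∅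

/-- `E(S) ∖ {0}`. -/
def ESnz : Set (Option (List A × Set V)) := {p | L.ESmem p ∧ p ≠ none}

/-- The natural order on `E(S)`: `(α,A,α) ≤ (β,B,β)` iff `α = βα'` and `A ⊆ r(B,α')`. -/
def ESle : Option (List A × Set V) → Option (List A × Set V) → Prop
  | none, _ => True
  | some _, none => False
  | some p, some q => ∃ γ : List A, p.1 = q.1 ++ γ ∧ p.2 ⊆ L.relR q.2 γ

open Classical in
/-- The product in the semilattice `E(S)`. -/
noncomputable def ESmul :
    Option (List A × Set V) → Option (List A × Set V) → Option (List A × Set V)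
  | none, _ => none
  | some _, none => none
  | some p, some q =>
    if p.1 <+: q.1 then
      if L.relR p.2 (q.1.drop p.1.length) ∩ q.2 = ∅ then none
      else some (q.1, L.relR p.2 (q.1.drop p.1.length) ∩ q.2)
    else if q.1 <+: p.1 then
      if p.2 ∩ L.relR q.2 (p.1.drop q.1.length) = ∅ then none
      else some (p.1, p.2 ∩ L.relR q.2 (p.1.drop q.1.length))
    else none

/-- A filter in `E(S)`. -/
def IsESFilter (ξ : Set (Option (List A × Set V))) : Prop :=
  ξ ⊆ L.ESnz ∧ ξ.Nonempty ∧
    (∀ p ∈ ξ, ∀ q, L.ESmem q → L.ESle p q → q ∈ ξ) ∧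
    (∀ p ∈ ξ, ∀ q ∈ ξ, ∃ z ∈ ξ, L.ESle z p ∧ L.ESle z q)

/-- `Z` is a cover for `x` in `E(S)`. -/
def ESCover (x : Option (List A × Set V)) (Z : Set (Option (List A × Set V))) : Prop :=
  (∀ z ∈ Z, L.ESmem z ∧ L.ESle z x) ∧
  ∀ y, L.ESmem y → y ≠ none → L.ESle y x → ∃ z ∈ Z, L.ESmul y z ≠ none

/-- A tight filter in `E(S)`: every finite cover of an element of the filter meets the filter. -/
def IsTightESFilter (ξ : Set (Option (List A × Set V))) : Prop :=
  L.IsESFilter ξ ∧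
    ∀ x ∈ ξ, ∀ Z : Set (Option (List A × Set V)), Z.Finite → L.ESCover x Z →
      (Z ∩ ξ).Nonempty

/-- The filter in `E(S)` associated with the pair `(w, F)` of a word together with a
(complete) family: `ξ = ⋃_n ⋃_{X ∈ F n} ↑(w_{1,n}, X)`. -/
def filterOf (w : LWord A) (F : ℕ → Set (Set V)) : Set (Option (List A × Set V)) :=
  {p | L.ESmem p ∧
    ∃ n : ℕ, (n : ℕ∞) ≤ wlen w ∧ ∃ X ∈ F n, L.ESle (some (wtake w n, X)) p}

/-- `ξ_n = {X : (w_{1,n}, X, w_{1,n}) ∈ ξ}`. -/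
def xiN (_L : LabelledSpace V Edg A) (w : LWord A) (ξ : Set (Option (List A × Set V)))
    (n : ℕ) : Set (Set V) :=
  {X | some (wtake w n, X) ∈ ξ}

/-- `T_w` : the tight filters in `E(S)` whose associated word is `w`. -/
def Tw (w : LWord A) : Set (Set (Option (List A × Set V))) :=
  {ξ | L.IsTightESFilter ξ ∧
    ∃ F : ℕ → Set (Set V), L.IsCompleteFamily w F ∧ ξ = L.filterOf w F}

/-- `T_{(α)w} = {ξ ∈ T_w : ξ₀ is an ultrafilter in ℬ with r(α) ∈ ξ₀}`, with
`T_{(ω)w} = T_w`. -/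
def TwP (α : List A) (w : LWord A) : Set (Set (Option (List A × Set V))) :=
  match α with
  | [] => L.Tw w
  | a :: l =>
    {ξ | ξ ∈ L.Tw w ∧ IsUltrafilterIn (L.Bw []) (L.xiN w ξ 0) ∧ L.wr (a :: l) ∈ L.xiN w ξ 0}

/-- The family `{J_i}` for `αw` built from a family `{F_n}` for `w`:
`J_{|α|+n} = g_{(α)w_{1,n}}(F_n)` for `1 ≤ n ≤ |w|` and
`J_i = f_{α_{1,i}[α_{i+1,|α|}w₁]}(J_{|α|+1})` for `0 ≤ i ≤ |α|`
(reading `J_{|α|} = g_{(α)ω}(F₀)` and `J_i = f_{α_{1,i}[α_{i+1,|α|}]}(J_{|α|})` when `w = ω`). -/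
def Jfamily (α : List A) (w : LWord A) (F : ℕ → Set (Set V)) : ℕ → Set (Set V) :=
  match w with
  | .inl [] => fun i =>
      if i < α.length then L.fmap (α.take i) (α.drop i) (L.gmap α [] (F 0))
      else L.gmap α [] (F 0)
  | w => fun i =>
      if i ≤ α.length then
        L.fmap (α.take i) (α.drop i ++ wtake w 1) (L.gmap α (wtake w 1) (F 1))
      else L.gmap α (wtake w (i - α.length)) (F (i - α.length))

/-- `G_{(α)w}` as an operation on filters in `E(S)`. -/
def Gmap (α : List A) (w : LWord A) (ξ : Set (Option (List A × Set V))) :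
    Set (Option (List A × Set V)) :=
  L.filterOf (wappend α w) (L.Jfamily α w (L.xiN w ξ))

/-- The family `{η_n}` for `w` built from a family for `αw`:
`η_n = h_{[α]w_{1,n}}(F_{|α|+n})`. -/
def Hfam (α : List A) (w : LWord A) (F : ℕ → Set (Set V)) : ℕ → Set (Set V) :=
  fun n => L.hmap (wtake w n) (F (α.length + n))

/-- `H_{[α]w}` as an operation on filters in `E(S)`. -/
def Hmap (α : List A) (w : LWord A) (ξ : Set (Option (List A × Set V))) :
    Set (Option (List A × Set V)) :=
  L.filterOf w (L.Hfam α w (L.xiN (wappend α w) ξ))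

end LabelledSpace

/-- The topology of pointwise convergence on sets of subsets of `V`
(product topology with discrete coordinates, via indicator functions). -/
def memTopology (V : Type*) : TopologicalSpace (Set (Set V)) :=
  show TopologicalSpace (Set V → Prop) from
    @Pi.topologicalSpace (Set V) (fun _ => Prop) (fun _ => ⊥)


/-- A path labelled `αβ` has a final segment labelled `β`, with the same range. -/
theorem LabelledSpace.wr_append_subset {V Edg A : Type*} (L : LabelledSpace V Edg A)
    (α β : List A) : L.wr (α ++ β) ⊆ L.wr β := by
  cases β with
  | nil => exact fun _ _ => trivial
  | cons b w =>
    cases α with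
    | nil => exact subset_rfl
    | cons a l =>
      rintro v ⟨p, hp, hmap, hne, -, hv⟩
      obtain ⟨p₁, p₂, rfl, -, h₂⟩ := List.map_eq_append_iff.1 (show _ = (a :: l) ++ b :: w from hmap)
      have hne₂ : p₂ ≠ [] := by rintro rfl; simp at h₂
      refine ⟨p₂, (List.isChain_append.1 hp).2.1, h₂, hne₂, trivial, ?_⟩
      rwa [List.getLast_append_of_ne_nil _ hne₂] at hv

theorem LGraph.IsLbl.of_append_right {V Edg A : Type*} {G : LGraph V Edg A} {α β : List A}
    (h : G.IsLbl (α ++ β)) : G.IsLbl β := by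
  obtain ⟨p, hp, hmap⟩ := h
  obtain ⟨p₁, p₂, rfl, -, h₂⟩ := List.map_eq_append_iff.1 hmap
  exact ⟨p₂, (List.isChain_append.1 hp).2.1, h₂⟩

theorem IsFilterIn.inter_mem {V : Type*} {P F : Set (Set V)} (hF : IsFilterIn P F)
    (hP : ∀ X ∈ P, ∀ Y ∈ P, X ∩ Y ∈ P) {X Y : Set V} (hX : X ∈ F) (hY : Y ∈ F) :
    X ∩ Y ∈ F := by
  obtain ⟨hFP, -, -, hup, hdir⟩ := hF
  obtain ⟨Z, hZ, hZX, hZY⟩ := hdir X hX Y hY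
  exact hup Z hZ _ (hP X (hFP hX) Y (hFP hY)) (subset_inter hZX hZY)

/-- An ultrafilter in an intersection-closed family `P` restricts, below any of its members `R`,
to an ultrafilter in the family of elements of `P` contained in `R`. -/
theorem IsUltrafilterIn.restrict {V : Type*} {P F : Set (Set V)} (hF : IsUltrafilterIn P F)
    (hP : ∀ X ∈ P, ∀ Y ∈ P, X ∩ Y ∈ P) {R : Set V} (hR : R ∈ F) :
    IsUltrafilterIn {X | X ∈ P ∧ X ⊆ R} {D | ∃ C ∈ F, D = C ∩ R} := by
  obtain ⟨hfil, hmax⟩ := hF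
  have hint : ∀ {X Y : Set V}, X ∈ F → Y ∈ F → X ∩ Y ∈ F := hfil.inter_mem hP
  obtain ⟨hFP, -, hempty, hup, -⟩ := hfil
  refine ⟨⟨?_, ⟨R, R, hR, (inter_self R).symm⟩, ?_, ?_, ?_⟩, ?_⟩
  · rintro _ ⟨C, hC, rfl⟩
    exact ⟨hFP (hint hC hR), inter_subset_right⟩
  · rintro ⟨C, hC, h⟩
    exact hempty (h ▸ hint hC hR)
  · rintro _ ⟨C, hC, rfl⟩ Y ⟨hY, hYR⟩ hCY
    exact ⟨Y, hup _ (hint hC hR) Y hY hCY, (inter_eq_left.2 hYR).symm⟩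
  · rintro _ ⟨C, hC, rfl⟩ _ ⟨D, hD, rfl⟩
    exact ⟨C ∩ D ∩ R, ⟨C ∩ D, hint hC hD, rfl⟩,
      inter_subset_inter_left _ inter_subset_left,
      inter_subset_inter_left _ inter_subset_right⟩
  · rintro G ⟨hGP, ⟨X₀, hX₀⟩, hGe, -, hGdir⟩ hle
    -- The upward closure of `G` in `P` is a filter containing `F`, so it equals `F`.
    have hcl : {D | D ∈ P ∧ ∃ C ∈ G, C ⊆ D} = F := by
      refine hmax _ ⟨fun D hD => hD.1, ⟨X₀, (hGP hX₀).1, X₀, hX₀, subset_rfl⟩, ?_, ?_, ?_⟩ ?_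
      · rintro ⟨-, C, hC, hCe⟩
        exact hGe (subset_empty_iff.1 hCe ▸ hC)
      · rintro X ⟨-, C, hC, hCX⟩ Y hY hXY
        exact ⟨hY, C, hC, hCX.trans hXY⟩
      · rintro X ⟨-, C, hC, hCX⟩ Y ⟨-, D, hD, hDY⟩
        obtain ⟨Z, hZ, hZC, hZD⟩ := hGdir C hC D hD
        exact ⟨Z, ⟨(hGP hZ).1, Z, hZ, subset_rfl⟩, hZC.trans hCX, hZD.trans hDY⟩
      · exact fun C hC => ⟨hFP hC, C ∩ R, hle ⟨C, hC, rfl⟩, inter_subset_left⟩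
    refine Subset.antisymm (fun X hX => ?_) hle
    have hXF : X ∈ F := hcl ▸ ⟨(hGP hX).1, X, hX, subset_rfl⟩
    exact ⟨X, hXF, (inter_eq_left.2 (hGP hX).2).symm⟩

namespace LabelledSpace

theorem Bw_inter_mem {V Edg A : Type*} (L : LabelledSpace V Edg A) (γ : List A) :
    ∀ X ∈ L.Bw γ, ∀ Y ∈ L.Bw γ, X ∩ Y ∈ L.Bw γ :=
  fun _ hX _ hY => ⟨L.inter_mem hX.1 hY.1, inter_subset_left.trans hX.2⟩

theorem mem_XP_iff {V Edg A : Type*} (L : LabelledSpace V Edg A) {α : List A} (hα : α ≠ [])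
    (β : List A) (F : Set (Set V)) :
    F ∈ L.XP α β ↔ F ∈ L.Xw β ∧ L.wr (α ++ β) ∈ F := by
  cases α with
  | nil => exact absurd rfl hα
  | cons a l => exact Iff.rfl

theorem gmap_nil {V Edg A : Type*} (L : LabelledSpace V Edg A) {γ : List A} {F : Set (Set V)}
    (hF : F ⊆ L.Bw γ) : L.gmap [] γ F = F := by
  ext D
  constructor
  · rintro ⟨C, hC, rfl⟩
    rwa [List.nil_append, inter_eq_left.2 (hF hC).2]
  · exact fun hD => ⟨D, hD, (inter_eq_left.2 (hF hD).2).symm⟩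

/-- For `β = ω` the map is the identity, even when also `γ = ω` and `r(ω)` need not lie in `ℬ`;
otherwise this is restriction below `r(βγ) ∈ F`. -/
theorem gmap_mem_Xw {V Edg A : Type*} (L : LabelledSpace V Edg A) {β γ : List A}
    {F : Set (Set V)} (hF : F ∈ L.XP β γ) : L.gmap β γ F ∈ L.Xw (β ++ γ) := by
  by_cases hβ : β = []
  · subst hβ
    have hF' : F ∈ L.Xw γ := hF
    rwa [L.gmap_nil hF'.1.1, List.nil_append]
  · obtain ⟨hF, hR⟩ := (L.mem_XP_iff hβ γ F).1 hF
    have hB : L.Bw (β ++ γ) = {X | X ∈ L.Bw γ ∧ X ⊆ L.wr (β ++ γ)} := by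
      ext X
      exact ⟨fun h => ⟨⟨h.1, h.2.trans (L.wr_append_subset β γ)⟩, h.2⟩,
        fun h => ⟨h.1.1, h.2⟩⟩
    have h := IsUltrafilterIn.restrict hF (L.Bw_inter_mem γ) hR
    rw [← hB] at h
    exact h

end LabelledSpace

section
variable {V Edg A : Type*} (L : LabelledSpace V Edg A)

/-- Basic properties of the maps `g`: (i) `X_{(αβ)γ} ⊆ X_{(β)γ}`;
(ii) `g_{(β)γ}(X_{(αβ)γ}) ⊆ X_{(α)βγ}`; (iii) `g_{(αβ)γ} = g_{(α)βγ} ∘ g_{(β)γ}`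
on `X_{(αβ)γ}`. -/
theorem gmap_props (α β γ : List A) (hα : α ≠ []) (hαl : L.IsLbl α)
    (hβ : L.IsLbl β) (hγ : L.IsLbl γ) (hαβγ : L.IsLbl (α ++ β ++ γ)) :
    (L.XP (α ++ β) γ ⊆ L.XP β γ) ∧
    (∀ F ∈ L.XP (α ++ β) γ, L.gmap β γ F ∈ L.XP α (β ++ γ)) ∧
    (∀ F ∈ L.XP (α ++ β) γ, L.gmap (α ++ β) γ F = L.gmap α (β ++ γ) (L.gmap β γ F)) := by
  have hαβ : α ++ β ≠ [] := by simp [hα]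
  have hsub : L.wr (α ++ (β ++ γ)) ⊆ L.wr (β ++ γ) := L.wr_append_subset α (β ++ γ)
  have h1 : L.XP (α ++ β) γ ⊆ L.XP β γ := by
    intro F hF
    obtain ⟨hFγ, hR⟩ := (L.mem_XP_iff hαβ γ F).1 hF
    by_cases hβ0 : β = []
    · subst hβ0
      exact hFγ
    · rw [List.append_assoc] at hR hαβγ
      refine (L.mem_XP_iff hβ0 γ F).2 ⟨hFγ, hFγ.1.2.2.2.1 _ hR _ ⟨?_, ?_⟩ hsub⟩
      · exact L.range_mem _ (by simp [hβ0]) hαβγ.of_append_right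
      · exact L.wr_append_subset β γ
  refine ⟨h1, fun F hF => ?_, fun F _ => ?_⟩
  · have hR := ((L.mem_XP_iff hαβ γ F).1 hF).2
    rw [List.append_assoc] at hR
    exact (L.mem_XP_iff hα _ _).2
      ⟨L.gmap_mem_Xw (h1 hF), _, hR, (inter_eq_left.2 hsub).symm⟩
  · have hcollapse : ∀ C : Set V,
        C ∩ L.wr (β ++ γ) ∩ L.wr (α ++ (β ++ γ)) = C ∩ L.wr (α ++ β ++ γ) := fun C => by
      rw [inter_assoc, inter_eq_right.2 hsub, List.append_assoc]
    ext D
    constructor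
    · rintro ⟨C, hC, rfl⟩
      exact ⟨_, ⟨C, hC, rfl⟩, (hcollapse C).symm⟩
    · rintro ⟨_, ⟨C, hC, rfl⟩, rfl⟩
      exact ⟨C, hC, hcollapse C⟩

end
end

section
/- Let (E,ℒ,ℬ) be a weakly left-resolving labelled space with ℬ closed under relative complements, let α be a nonempty finite labelled path and β ∈ ℒ^{≤∞}(E) be such that αβ ∈ ℒ^{≤∞}(E). Let ξ ∈ T_{(α)β} with complete family {ξ_n}_{0≤n≤|β|}, and define {J_i}_{0≤i≤|αβ|} by J_{|α|+n} = g_{(α)β_{1,n}}(ξ_n) for 1 ≤ n ≤ |β| and J_i = f_{α_{1,i}[α_{i+1,|α|}β₁]}(J_{|α|+1}) for 0 ≤ i ≤ |α| (reading J_{|α|} = g_{(α)ω}(ξ₀) and J_i = f_{α_{1,i}[α_{i+1,|α|}]}(J_{|α|}) when β = ω). Then {J_i} is a complete family for αβ and the filter in E(S) with word αβ associated with it is a tight filter. -/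
/-!
The argument rests on two facts about the filter `ξ` with word `w`: it is tight, and
`r(α) ∈ ξ₀`.

From `r(α) ∈ ξ₀` one gets `r(α w_{1,n}) ∈ ξ_n` for all `n`, so `J_{|α|+n}` consists of the
members of `ξ_n` contained in `r(α w_{1,n})`, and `J_i` for `i ≤ |α|` consists of the
`X ∈ ℬ_{α_{1,i}}` with `r(X, α_{i+1,|α|}) ∈ ξ₀` (`GlueData.mem_J_add`, `GlueData.mem_J_le`).
With these descriptions completeness of `{J_i}` is inherited from that of `{ξ_n}`, weak
left-resolution giving closure under intersections.

The associated filter is the upward closure of `{(αδ, U) : (δ, U) ∈ ξ, U ⊆ r(αδ)}`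
(`GlueData.mem_filterOf`). For `(δ, Y) ∈ ξ` with `Y ⊆ r(αδ)`, deleting `α` is an order
isomorphism from the elements of `E(S)` below `(αδ, Y)` onto those below `(δ, Y)`. A finite
cover of an element above `(αδ, Y)` restricts, by taking meets, to a finite cover of
`(αδ, Y)`, hence gives a finite cover of `(δ, Y)`, which meets `ξ` by tightness; adding `α`
back gives an element of the original cover in the glued filter (`GlueData.isTight`).
-/


open Set

/-! ### Relative ranges -/

namespace LGraph

variable {V Edg A : Type*} (G : LGraph V Edg A)

theorem relR_cons (S : Set V) (a : A) (w : List A) :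
    G.relR S (a :: w) = G.relR {v | ∃ e, G.lbl e = a ∧ G.src e ∈ S ∧ G.rng e = v} w := by
  cases w with
  | nil =>
    ext v
    constructor
    · rintro ⟨p, hp, hm, h, hs, hr⟩
      obtain ⟨e, rfl⟩ : ∃ e, p = [e] := by
        rw [← List.length_eq_one_iff, ← List.length_map (f := G.lbl), hm]; rfl
      exact ⟨e, by simpa using hm, hs, hr⟩
    · rintro ⟨e, he, hs, hr⟩
      exact ⟨[e], List.isChain_singleton _, by simpa using he, by simp, hs, hr⟩
  | cons b w =>
    ext v
    constructor
    · rintro ⟨p, hp, hm, h, hs, hr⟩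
      rcases p with _ | ⟨e, _ | ⟨f, p⟩⟩
      · simp at hm
      · simp at hm
      · simp only [List.map_cons, List.cons.injEq] at hm
        have hp' := List.isChain_cons_cons.1 hp
        refine ⟨f :: p, hp'.2, by simp [hm], by simp, ⟨e, hm.1, hs, hp'.1⟩, ?_⟩
        rw [← hr]; simp
    · rintro ⟨p, hp, hm, h, ⟨e, he, hs, hr⟩, hv⟩
      rcases p with _ | ⟨f, p⟩
      · simp at hm
      · refine ⟨e :: f :: p, List.isChain_cons_cons.2 ⟨hr, hp⟩, by simpa [he] using hm,
          by simp, hs, ?_⟩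
        rw [← hv]; simp

theorem relR_append (S : Set V) (u v : List A) :
    G.relR S (u ++ v) = G.relR (G.relR S u) v := by
  induction u generalizing S with
  | nil => rfl
  | cons a u ih => rw [List.cons_append, relR_cons, ih, ← relR_cons]

theorem relR_mono {S T : Set V} (h : S ⊆ T) (u : List A) : G.relR S u ⊆ G.relR T u := by
  cases u with
  | nil => exact h
  | cons a u =>
    rintro v ⟨p, hp, hm, hn, hs, hr⟩
    exact ⟨p, hp, hm, hn, h hs, hr⟩

theorem relR_empty (u : List A) : G.relR ∅ u = ∅ := by
  cases u with
  | nil => rfl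
  | cons a u =>
    refine Set.eq_empty_of_forall_notMem ?_
    rintro v ⟨p, hp, hm, hn, hs, hr⟩
    exact hs

theorem isLbl_of_relR_nonempty {S : Set V} {u : List A} (h : (G.relR S u).Nonempty) :
    G.IsLbl u := by
  cases u with
  | nil => exact ⟨[], List.isChain_nil, rfl⟩
  | cons a u =>
    obtain ⟨v, p, hp, hm, _⟩ := h
    exact ⟨p, hp, hm⟩

end LGraph

/-! ### Subwords of finite and infinite words -/

section Words

variable {A : Type*}

theorem wtake_length (w : LWord A) (n : ℕ) (h : (n : ℕ∞) ≤ wlen w) :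
    (wtake w n).length = n := by
  rcases w with l | f
  · have : n ≤ l.length := by simpa [wlen] using h
    simpa [wtake] using this
  · simp [wtake]

theorem wtake_prefix (w : LWord A) {m n : ℕ} (h : m ≤ n) : wtake w m <+: wtake w n := by
  rcases w with l | f
  · exact List.take_prefix_take_left h
  · refine List.IsPrefix.map f ?_
    obtain ⟨k, rfl⟩ := Nat.exists_eq_add_of_le h
    rw [List.range_add]
    exact List.prefix_append _ _

theorem wtake_zero (w : LWord A) : wtake w 0 = [] := by
  rcases w with l | f <;> simp [wtake]

theorem wtake_wappend_add (α : List A) (w : LWord A) (n : ℕ) :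
    wtake (wappend α w) (α.length + n) = α ++ wtake w n := by
  rcases w with l | f
  · simp [wtake, wappend, List.take_append]
  · refine List.ext_getElem (by simp [wtake, wappend]) fun i h₁ h₂ => ?_
    by_cases hi : i < α.length
    · simp [wtake, wappend, hi]
    · simp [wtake, wappend, hi, List.getElem_append_right (not_lt.1 hi)]

theorem wtake_wappend_le (α : List A) (w : LWord A) {i : ℕ} (h : i ≤ α.length) :
    wtake (wappend α w) i = α.take i := by
  rcases w with l | f
  · simp [wtake, wappend, List.take_append_of_le_length h]
  · refine List.ext_getElem (by simpa [wtake, wappend] using h) fun j h₁ h₂ => ?_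
    have hj : j < i := by simpa [wtake, wappend] using h₁
    simp [wtake, wappend, hj.trans_le h]

theorem wlen_wappend (α : List A) (w : LWord A) :
    wlen (wappend α w) = α.length + wlen w := by
  rcases w with l | f <;> simp [wlen, wappend]

end Words

namespace LabelledSpace

variable {V Edg A : Type*} {L : LabelledSpace V Edg A}

/-! ### The lattice of relative ranges -/

theorem relR_concat (S : Set V) (u v : List A) :
    L.relR S (u ++ v) = L.relR (L.relR S u) v :=
  L.toLGraph.relR_append S u v

theorem relR_of_empty (u : List A) : L.relR ∅ u = ∅ :=
  L.toLGraph.relR_empty u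


theorem relR_subset_wr_append {X : Set V} {β : List A} (h : X ⊆ L.wr β) (γ : List A) :
    L.relR X γ ⊆ L.wr (β ++ γ) := by
  rw [wr, relR_concat]
  exact L.relR_mono h γ

theorem wr_append_subset_s13 (α β : List A) : L.wr (α ++ β) ⊆ L.wr β := by
  rw [wr, relR_concat]
  exact L.relR_mono (Set.subset_univ _) β

/-- Relative ranges stay in `ℬ` along arbitrary words: along a word that is not a labelled
path the relative range is `∅`, which lies in `ℬ` as a relative complement. -/
theorem relR_mem_all (hc : L.ClosedUnderRelComplements) {X : Set V} (hX : X ∈ L.ℬ)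
    (γ : List A) : L.relR X γ ∈ L.ℬ := by
  rcases Set.eq_empty_or_nonempty (L.relR X γ) with h | h
  · rw [h, ← Set.sdiff_self (s := X)]
    exact hc hX hX
  · exact L.relR_mem hX γ (L.isLbl_of_relR_nonempty h)

theorem relR_inter_all (hwlr : L.WeaklyLeftResolving) {X Y : Set V} (hX : X ∈ L.ℬ)
    (hY : Y ∈ L.ℬ) (γ : List A) : L.relR (X ∩ Y) γ = L.relR X γ ∩ L.relR Y γ := by
  by_cases h : γ = []
  · subst h; rfl
  · exact hwlr hX hY γ h

theorem relR_mem_Bw (hc : L.ClosedUnderRelComplements) {X : Set V} {β : List A}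
    (hX : X ∈ L.Bw β) (γ : List A) : L.relR X γ ∈ L.Bw (β ++ γ) :=
  ⟨relR_mem_all hc hX.1 γ, relR_subset_wr_append hX.2 γ⟩

/-! ### Order and meets in `E(S)` -/

theorem ESle_trans {p q r : Option (List A × Set V)} (h₁ : L.ESle p q) (h₂ : L.ESle q r) :
    L.ESle p r := by
  rcases p with _ | p
  · trivial
  rcases q with _ | q
  · exact h₁.elim
  rcases r with _ | r
  · exact h₂.elim
  obtain ⟨γ, hγ, hs⟩ := h₁
  obtain ⟨δ, hδ, ht⟩ := h₂
  refine ⟨δ ++ γ, by rw [hγ, hδ, List.append_assoc], ?_⟩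
  rw [relR_concat]
  exact hs.trans (L.relR_mono ht γ)

theorem ESle_refl (p : Option (List A × Set V)) : L.ESle p p := by
  rcases p with _ | p
  · trivial
  · exact ⟨[], by simp, subset_rfl⟩

theorem ESle_relR (β : List A) (X : Set V) (γ : List A) :
    L.ESle (some (β ++ γ, L.relR X γ)) (some (β, X)) :=
  ⟨γ, rfl, subset_rfl⟩

/-- Prepending a fixed word does not change the order. -/
theorem ESle_append_iff (α β γ : List A) (X Y : Set V) :
    L.ESle (some (α ++ β, X)) (some (α ++ γ, Y)) ↔ L.ESle (some (β, X)) (some (γ, Y)) := by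
  simp [ESle]

theorem ESmul_lower (hc : L.ClosedUnderRelComplements) {p q : Option (List A × Set V)}
    (hp : L.ESmem p) (hq : L.ESmem q) :
    L.ESmem (L.ESmul p q) ∧ L.ESle (L.ESmul p q) p ∧ L.ESle (L.ESmul p q) q := by
  rcases p with _ | ⟨β, X⟩
  · exact ⟨trivial, trivial, trivial⟩
  rcases q with _ | ⟨γ, Y⟩
  · exact ⟨trivial, trivial, trivial⟩
  obtain ⟨⟨hX, hXw⟩, -⟩ := hp
  obtain ⟨⟨hY, hYw⟩, -⟩ := hq
  simp only at hX hXw hY hYw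
  by_cases h₁ : β <+: γ
  · obtain ⟨δ, rfl⟩ := h₁
    by_cases he : L.relR X δ ∩ Y = ∅
    · simp [ESmul, he, ESmem, ESle]
    · simp only [ESmul, List.prefix_append, if_true, List.drop_left, he, if_false]
      exact ⟨⟨⟨L.inter_mem (relR_mem_all hc hX δ) hY, Set.inter_subset_right.trans hYw⟩, he⟩,
        ⟨δ, rfl, Set.inter_subset_left⟩, ⟨[], by simp, Set.inter_subset_right⟩⟩
  · by_cases h₂ : γ <+: β
    · obtain ⟨δ, rfl⟩ := h₂
      by_cases he : X ∩ L.relR Y δ = ∅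
      · simp [ESmul, he, h₁, ESmem, ESle]
      · simp only [ESmul, h₁, List.prefix_append, if_true, List.drop_left, he, if_false]
        exact ⟨⟨⟨L.inter_mem hX (relR_mem_all hc hY δ), Set.inter_subset_left.trans hXw⟩, he⟩,
          ⟨[], by simp, Set.inter_subset_left⟩, ⟨δ, rfl, Set.inter_subset_right⟩⟩
    · simp [ESmul, h₁, h₂, ESmem, ESle]

/-- Together with `ESmul_lower`, this says that the product of `E(S)` is the meet for `ESle`;
it is where weak left-resolution enters. -/
theorem ESle_ESmul (hwlr : L.WeaklyLeftResolving) (hc : L.ClosedUnderRelComplements)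
    {u p q : Option (List A × Set V)} (hu : L.ESmem u)
    (hp : L.ESmem p) (hq : L.ESmem q) (hup : L.ESle u p) (huq : L.ESle u q) :
    L.ESle u (L.ESmul p q) := by
  rcases u with _ | ⟨μ, S⟩
  · trivial
  rcases p with _ | ⟨β, X⟩
  · exact hup.elim
  rcases q with _ | ⟨γ, Y⟩
  · exact huq.elim
  obtain ⟨⟨hX, -⟩, -⟩ := hp
  obtain ⟨⟨hY, -⟩, -⟩ := hq
  obtain ⟨-, hS⟩ := hu
  obtain ⟨δ, hδ, hSX⟩ := hup
  obtain ⟨ε, hε, hSY⟩ := huq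
  simp only at hX hY hS hδ hSX hε hSY
  have key : ∀ {T : Set V} {κ : List A}, S ⊆ L.relR T κ → T ≠ ∅ := by
    rintro T κ h rfl
    rw [relR_of_empty] at h
    exact hS (Set.subset_empty_iff.1 h)
  by_cases h₁ : β <+: γ
  · obtain ⟨κ, rfl⟩ := h₁
    have : δ = κ ++ ε := by
      rw [hδ, List.append_assoc] at hε; exact List.append_cancel_left hε
    subst this
    rw [relR_concat] at hSX
    have hsub : S ⊆ L.relR (L.relR X κ ∩ Y) ε := by
      rw [relR_inter_all hwlr (relR_mem_all hc hX κ) hY]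
      exact Set.subset_inter hSX hSY
    simp only [ESmul, List.prefix_append, if_true, List.drop_left, key hsub, if_false]
    exact ⟨ε, hε, hsub⟩
  · have h₂ : γ <+: β := by
      rcases List.prefix_or_prefix_of_prefix (l₁ := β) (l₂ := γ) (l₃ := μ)
        ⟨δ, hδ.symm⟩ ⟨ε, hε.symm⟩ with h | h
      · exact (h₁ h).elim
      · exact h
    obtain ⟨κ, rfl⟩ := h₂
    have : ε = κ ++ δ := by
      rw [hε, List.append_assoc] at hδ; exact List.append_cancel_left hδ
    subst this
    rw [relR_concat] at hSY
    have hsub : S ⊆ L.relR (X ∩ L.relR Y κ) δ := by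
      rw [relR_inter_all hwlr hX (relR_mem_all hc hY κ)]
      exact Set.subset_inter hSX hSY
    simp only [ESmul, h₁, List.prefix_append, if_true, List.drop_left, key hsub, if_false]
    exact ⟨δ, hδ, hsub⟩

/-! ### Filters in `E(S)` with a given word -/

/-- `ξ` is a filter in `E(S)` with word `w`: the words occurring in `ξ` are exactly the
finite initial subwords of `w`. Moreover `r(α)` belongs to `ξ₀`. -/
structure GlueData (L : LabelledSpace V Edg A) (α : List A) (w : LWord A)
    (ξ : Set (Option (List A × Set V))) : Prop where
  filt : L.IsESFilter ξ
  word : ∀ δ U, some (δ, U) ∈ ξ → ∃ m : ℕ, (m : ℕ∞) ≤ wlen w ∧ δ = wtake w m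
  occ : ∀ n : ℕ, (n : ℕ∞) ≤ wlen w → ∃ U, some (wtake w n, U) ∈ ξ
  base : some ([], L.wr α) ∈ ξ

theorem glueData_of_mem {α : List A} (hα : α ≠ []) {w : LWord A}
    {ξ : Set (Option (List A × Set V))} (hξ : ξ ∈ L.TwP α w) : GlueData L α w ξ := by
  obtain _ | ⟨a, l⟩ := α
  · exact (hα rfl).elim
  obtain ⟨⟨ht, F, hF, rfl⟩, -, hb⟩ := hξ
  have hb' : some ([], L.wr (a :: l)) ∈ L.filterOf w F := by
    have : some (wtake w 0, L.wr (a :: l)) ∈ L.filterOf w F := hb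
    rwa [wtake_zero] at this
  refine ⟨ht.1, ?_, ?_, hb'⟩
  · rintro δ U ⟨-, k, hk, Y, -, γ, hγ, -⟩
    simp only at hγ
    have hlen := wtake_length w k hk
    rw [hγ, List.length_append] at hlen
    have hle : (δ.length : ℕ∞) ≤ wlen w :=
      le_trans (by exact_mod_cast (by omega : δ.length ≤ k)) hk
    refine ⟨δ.length, hle, ?_⟩
    refine List.IsPrefix.eq_of_length (List.prefix_of_prefix_length_le
      (l₃ := wtake w k) ⟨γ, hγ.symm⟩ (wtake_prefix w (by omega)) ?_) ?_
    · rw [wtake_length w _ hle]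
    · rw [wtake_length w _ hle]
  · intro n hn
    rcases Nat.eq_zero_or_pos n with rfl | hpos
    · rw [wtake_zero]; exact ⟨_, hb'⟩
    · obtain ⟨hsub, ⟨X, hX⟩, hne, -⟩ := hF.1 n hpos hn
      exact ⟨X, ⟨hsub hX, fun h => hne (h ▸ hX)⟩, n, hn, X, hX, ESle_refl _⟩

section Glue

variable {α : List A} {w : LWord A} {ξ : Set (Option (List A × Set V))}

theorem GlueData.mem (H : GlueData L α w ξ) {δ : List A} {U : Set V}
    (h : some (δ, U) ∈ ξ) : U ∈ L.Bw δ ∧ U ≠ ∅ :=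
  (H.filt.1 h).1

theorem GlueData.up (H : GlueData L α w ξ) {δ : List A} {U T : Set V}
    (h : some (δ, U) ∈ ξ) (hT : T ∈ L.Bw δ) (hUT : U ⊆ T) : some (δ, T) ∈ ξ := by
  refine H.filt.2.2.1 _ h _ ⟨hT, ?_⟩ ⟨[], by simp, hUT⟩
  rintro rfl
  exact (H.mem h).2 (Set.subset_empty_iff.1 hUT)

theorem GlueData.inter (H : GlueData L α w ξ) (hwlr : L.WeaklyLeftResolving)
    {δ : List A} {U T : Set V} (h₁ : some (δ, U) ∈ ξ) (h₂ : some (δ, T) ∈ ξ) :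
    some (δ, U ∩ T) ∈ ξ := by
  obtain ⟨z, hz, hz₁, hz₂⟩ := H.filt.2.2.2 _ h₁ _ h₂
  obtain _ | ⟨μ, S⟩ := z
  · exact ((H.filt.1 hz).2 rfl).elim
  obtain ⟨γ, hγ, hS₁⟩ := hz₁
  obtain ⟨γ', hγ', hS₂⟩ := hz₂
  simp only at hγ hγ' hS₁ hS₂
  obtain rfl : γ = γ' := List.append_cancel_left (hγ.symm.trans hγ')
  have hU := (H.mem h₁).1
  have hT := (H.mem h₂).1
  have hsub : S ⊆ L.relR (U ∩ T) γ := by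
    rw [relR_inter_all hwlr hU.1 hT.1]; exact Set.subset_inter hS₁ hS₂
  refine H.filt.2.2.1 _ hz _ ⟨⟨L.inter_mem hU.1 hT.1, Set.inter_subset_left.trans hU.2⟩, ?_⟩
    ⟨γ, hγ, hsub⟩
  intro he
  simp only at he
  rw [he, relR_of_empty] at hsub
  exact (H.mem hz).2 (Set.subset_empty_iff.1 hsub)

/-- Relative ranges along the word of `ξ` stay in `ξ`: compare with any element of `ξ`
whose word is the longer one. -/
theorem GlueData.push (H : GlueData L α w ξ) (hc : L.ClosedUnderRelComplements)
    {δ γ : List A} {X : Set V} (h : some (δ, X) ∈ ξ) {m : ℕ} (hm : (m : ℕ∞) ≤ wlen w)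
    (hδ : δ ++ γ = wtake w m) : some (δ ++ γ, L.relR X γ) ∈ ξ := by
  obtain ⟨U, hU⟩ := H.occ m hm
  rw [← hδ] at hU
  obtain ⟨z, hz, hz₁, hz₂⟩ := H.filt.2.2.2 _ h _ hU
  obtain _ | ⟨μ, S⟩ := z
  · exact ((H.filt.1 hz).2 rfl).elim
  obtain ⟨ε, hε, hS⟩ := hz₁
  obtain ⟨ε', hε', -⟩ := hz₂
  simp only at hε hε' hS
  obtain rfl : ε = γ ++ ε' := by
    rw [hε, List.append_assoc] at hε'; exact List.append_cancel_left hε'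
  rw [relR_concat] at hS
  refine H.filt.2.2.1 _ hz _ ⟨relR_mem_Bw hc (H.mem h).1 γ, ?_⟩ ⟨ε', hε', hS⟩
  intro he
  simp only at he
  rw [he, relR_of_empty] at hS
  exact (H.mem hz).2 (Set.subset_empty_iff.1 hS)

theorem GlueData.pull (H : GlueData L α w ξ) {δ γ : List A} {X : Set V} (hX : X ∈ L.Bw δ)
    (h : some (δ ++ γ, L.relR X γ) ∈ ξ) : some (δ, X) ∈ ξ := by
  refine H.filt.2.2.1 _ h _ ⟨hX, ?_⟩ (ESle_relR δ X γ)
  rintro he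
  simp only at he
  refine (H.mem h).2 ?_
  rw [he, relR_of_empty]

theorem GlueData.range (H : GlueData L α w ξ) (hc : L.ClosedUnderRelComplements) {m : ℕ}
    (hm : (m : ℕ∞) ≤ wlen w) : some (wtake w m, L.wr (α ++ wtake w m)) ∈ ξ := by
  have := H.push hc (γ := wtake w m) H.base hm rfl
  rwa [wr, relR_concat]

/-- As `r(α β_{1,n}) ∈ ξ_n`, cutting down by it just selects the members of `ξ_n` below it. -/
theorem GlueData.mem_gmap (H : GlueData L α w ξ) (hwlr : L.WeaklyLeftResolving)
    (hc : L.ClosedUnderRelComplements) {n : ℕ} (hn : (n : ℕ∞) ≤ wlen w) {Y : Set V} :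
    Y ∈ L.gmap α (wtake w n) (L.xiN w ξ n) ↔
      some (wtake w n, Y) ∈ ξ ∧ Y ⊆ L.wr (α ++ wtake w n) := by
  constructor
  · rintro ⟨C, hC, rfl⟩
    exact ⟨H.inter hwlr hC (H.range hc hn), Set.inter_subset_right⟩
  · rintro ⟨h, hs⟩
    exact ⟨Y, h, (Set.inter_eq_left.2 hs).symm⟩

/-! ### The glued family -/

/-- `J_i = {X ∈ ℬ_{α_{1,i}} : r(X, α_{i+1,|α|}) ∈ ξ₀}` for `i ≤ |α|`, whether `w` is empty
or not. -/
theorem GlueData.mem_J_le (H : GlueData L α w ξ) (hwlr : L.WeaklyLeftResolving)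
    (hc : L.ClosedUnderRelComplements) {i : ℕ} (hi : i ≤ α.length) {X : Set V} :
    X ∈ L.Jfamily α w (L.xiN w ξ) i ↔
      X ∈ L.Bw (α.take i) ∧ some ([], L.relR X (α.drop i)) ∈ ξ := by
  have hsub : X ∈ L.Bw (α.take i) → L.relR X (α.drop i) ∈ L.Bw α := fun h => by
    simpa using relR_mem_Bw hc h (α.drop i)
  have h0 : ∀ Y : Set V, Y ∈ L.gmap α [] (L.xiN w ξ 0) ↔ some ([], Y) ∈ ξ ∧ Y ⊆ L.wr α := by
    intro Y
    have := H.mem_gmap hwlr hc (n := 0) (by simp) (Y := Y)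
    simpa only [wtake_zero, List.append_nil] using this
  have h1 : (1 : ℕ∞) ≤ wlen w → (X ∈ L.fmap (α.take i) (α.drop i ++ wtake w 1)
      (L.gmap α (wtake w 1) (L.xiN w ξ 1)) ↔
        X ∈ L.Bw (α.take i) ∧ some ([], L.relR X (α.drop i)) ∈ ξ) := by
    intro hw
    refine and_congr_right fun hX => ?_
    have hY := hsub hX
    rw [H.mem_gmap hwlr hc (by exact_mod_cast hw), relR_concat]
    constructor
    · rintro ⟨h, -⟩
      exact H.pull (δ := []) (γ := wtake w 1) ⟨hY.1, Set.subset_univ _⟩ h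
    · intro h
      exact ⟨H.push hc (δ := []) (γ := wtake w 1) h (m := 1) (by exact_mod_cast hw) rfl,
        relR_subset_wr_append hY.2 _⟩
  rcases w with (_ | ⟨b, l⟩) | f
  · rcases hi.lt_or_eq with hlt | rfl
    · simp only [Jfamily, hlt, if_true, fmap, Set.mem_ofPred_eq, h0]
      constructor
      · rintro ⟨h, h', -⟩; exact ⟨h, h'⟩
      · rintro ⟨h, h'⟩; exact ⟨h, h', (hsub h).2⟩
    · simp only [Jfamily, lt_irrefl, if_false, h0, List.take_length, List.drop_length]
      constructor
      · rintro ⟨h, h'⟩; exact ⟨⟨(H.mem h).1.1, h'⟩, h⟩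
      · rintro ⟨h, h'⟩; exact ⟨h', h.2⟩
  · simp only [Jfamily, hi, if_true]
    exact h1 (by simp [wlen])
  · simp only [Jfamily, hi, if_true]
    exact h1 (by simp [wlen])

theorem GlueData.mem_J_add (H : GlueData L α w ξ) (hwlr : L.WeaklyLeftResolving)
    (hc : L.ClosedUnderRelComplements) {n : ℕ} (hn : (n : ℕ∞) ≤ wlen w) {Y : Set V} :
    Y ∈ L.Jfamily α w (L.xiN w ξ) (α.length + n) ↔
      some (wtake w n, Y) ∈ ξ ∧ Y ⊆ L.wr (α ++ wtake w n) := by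
  rcases Nat.eq_zero_or_pos n with rfl | hpos
  · rw [H.mem_J_le hwlr hc (by simp), wtake_zero]
    simp only [Nat.add_zero, List.take_length, List.drop_length, List.append_nil]
    constructor
    · rintro ⟨h, h'⟩; exact ⟨h', h.2⟩
    · rintro ⟨h, h'⟩; exact ⟨⟨(H.mem h).1.1, h'⟩, h⟩
  · have hle : ¬ α.length + n ≤ α.length := by omega
    rw [← H.mem_gmap hwlr hc hn]
    rcases w with (_ | ⟨b, l⟩) | f
    · have : n ≤ 0 := by simpa [wlen] using hn
      omega
    · simp only [Jfamily, hle, if_false, Nat.add_sub_cancel_left]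
    · simp only [Jfamily, hle, if_false, Nat.add_sub_cancel_left]

theorem GlueData.filter_J_le (H : GlueData L α w ξ) (hwlr : L.WeaklyLeftResolving)
    (hc : L.ClosedUnderRelComplements) {i : ℕ} (hi : i ≤ α.length)
    (hne : (L.Jfamily α w (L.xiN w ξ) i).Nonempty) :
    IsFilterIn (L.Bw (α.take i)) (L.Jfamily α w (L.xiN w ξ) i) := by
  refine ⟨fun X hX => ((H.mem_J_le hwlr hc hi).1 hX).1, hne, ?_, ?_, ?_⟩
  · intro h
    have := ((H.mem_J_le hwlr hc hi).1 h).2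
    exact (H.mem this).2 (relR_of_empty (L := L) _)
  · intro X hX Y hY hXY
    rw [H.mem_J_le hwlr hc hi] at hX ⊢
    exact ⟨hY, H.up hX.2 ⟨relR_mem_all hc hY.1 _, Set.subset_univ _⟩ (L.relR_mono hXY _)⟩
  · intro X hX Y hY
    refine ⟨X ∩ Y, ?_, Set.inter_subset_left, Set.inter_subset_right⟩
    rw [H.mem_J_le hwlr hc hi] at hX hY ⊢
    refine ⟨⟨L.inter_mem hX.1.1 hY.1.1, Set.inter_subset_left.trans hX.1.2⟩, ?_⟩
    rw [relR_inter_all hwlr hX.1.1 hY.1.1]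
    exact H.inter hwlr hX.2 hY.2

theorem GlueData.filter_J_add (H : GlueData L α w ξ) (hwlr : L.WeaklyLeftResolving)
    (hc : L.ClosedUnderRelComplements) {n : ℕ} (hn : (n : ℕ∞) ≤ wlen w) :
    IsFilterIn (L.Bw (α ++ wtake w n)) (L.Jfamily α w (L.xiN w ξ) (α.length + n)) := by
  refine ⟨?_, ⟨_, (H.mem_J_add hwlr hc hn).2 ⟨H.range hc hn, subset_rfl⟩⟩, ?_, ?_, ?_⟩
  · intro X hX
    rw [H.mem_J_add hwlr hc hn] at hX
    exact ⟨(H.mem hX.1).1.1, hX.2⟩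
  · intro h
    exact (H.mem ((H.mem_J_add hwlr hc hn).1 h).1).2 rfl
  · intro X hX Y hY hXY
    rw [H.mem_J_add hwlr hc hn] at hX ⊢
    exact ⟨H.up hX.1 ⟨hY.1, hY.2.trans (wr_append_subset_s13 _ _)⟩ hXY, hY.2⟩
  · intro X hX Y hY
    refine ⟨X ∩ Y, ?_, Set.inter_subset_left, Set.inter_subset_right⟩
    rw [H.mem_J_add hwlr hc hn] at hX hY ⊢
    exact ⟨H.inter hwlr hX.1 hY.1, Set.inter_subset_left.trans hX.2⟩

theorem GlueData.completeFamily (H : GlueData L α w ξ) (hwlr : L.WeaklyLeftResolving)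
    (hc : L.ClosedUnderRelComplements) :
    L.IsCompleteFamily (wappend α w) (L.Jfamily α w (L.xiN w ξ)) := by
  have split : ∀ n : ℕ, α.length ≤ n → (n : ℕ∞) ≤ wlen (wappend α w) →
      ∃ k : ℕ, n = α.length + k ∧ (k : ℕ∞) ≤ wlen w := by
    intro n h hn
    obtain ⟨k, rfl⟩ := Nat.exists_eq_add_of_le h
    rw [wlen_wappend, Nat.cast_add] at hn
    exact ⟨k, rfl, (ENat.add_le_add_iff_left (ENat.natCast_ne_top _)).1 hn⟩
  refine ⟨?_, ?_, ?_⟩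
  · intro n hpos hn
    rcases le_total n α.length with h | h
    · rw [wtake_wappend_le α w h]
      refine H.filter_J_le hwlr hc h ⟨L.wr (α.take n), (H.mem_J_le hwlr hc h).2 ?_⟩
      have he : L.relR (L.wr (α.take n)) (α.drop n) = L.wr α := by
        rw [wr, ← relR_concat, List.take_append_drop, wr]
      refine ⟨⟨L.range_mem _ ?_ (L.isLbl_of_relR_nonempty (S := Set.univ) ?_), subset_rfl⟩, ?_⟩
      · intro h0
        have := congrArg List.length h0
        rw [List.length_take, List.length_nil] at this
        omega
      · rw [Set.nonempty_iff_ne_empty]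
        intro (h0 : L.wr (α.take n) = ∅)
        refine (H.mem H.base).2 ?_
        rw [← he, h0, relR_of_empty]
      · rw [he]; exact H.base
    · obtain ⟨k, rfl, hk⟩ := split n h hn
      rw [wtake_wappend_add]
      exact H.filter_J_add hwlr hc hk
  · rcases Set.eq_empty_or_nonempty (L.Jfamily α w (L.xiN w ξ) 0) with h | h
    · exact Or.inr h
    · exact Or.inl (by simpa using H.filter_J_le hwlr hc (Nat.zero_le _) h)
  · intro n hn
    have hn' : ((n + 1 : ℕ) : ℕ∞) ≤ wlen (wappend α w) := by
      exact_mod_cast Order.add_one_le_of_lt hn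
    ext X
    simp only [Set.mem_ofPred_eq]
    rcases lt_or_ge n α.length with h | h
    · rw [wtake_wappend_le α w h.le, wtake_wappend_le α w (Nat.succ_le_of_lt h),
        H.mem_J_le hwlr hc h.le, H.mem_J_le hwlr hc (Nat.succ_le_of_lt h)]
      have hd : (α.take (n + 1)).drop n ++ α.drop (n + 1) = α.drop n := by
        refine List.append_cancel_left (as := α.take n) ?_
        rw [← List.append_assoc]
        have : α.take n = (α.take (n + 1)).take n := by rw [List.take_take]; simp
        rw [this, List.take_append_drop, ← this, List.take_append_drop, List.take_append_drop]
      have ht : α.take n ++ (α.take (n + 1)).drop n = α.take (n + 1) := by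
        have : α.take n = (α.take (n + 1)).take n := by rw [List.take_take]; simp
        rw [this, List.take_append_drop]
      rw [← relR_concat, hd]
      refine and_congr_right fun hX => (and_iff_right ?_).symm
      have := relR_mem_Bw hc hX ((α.take (n + 1)).drop n)
      rwa [ht] at this
    · obtain ⟨k, rfl, hk⟩ := split n h hn.le
      obtain ⟨k', hkk, hk'⟩ := split (α.length + k + 1) (by omega) hn'
      obtain rfl : k' = k + 1 := by omega
      obtain ⟨γ, hγ⟩ := wtake_prefix w (Nat.le_succ k)
      have hd : (wtake (wappend α w) (α.length + k + 1)).drop (α.length + k) = γ := by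
        rw [add_assoc, wtake_wappend_add, ← List.drop_drop, List.drop_left, ← hγ]
        exact List.drop_left' (wtake_length w k hk)
      rw [hd, add_assoc, H.mem_J_add hwlr hc hk, H.mem_J_add hwlr hc hk', wtake_wappend_add,
        ← Nat.succ_eq_add_one, ← hγ, ← List.append_assoc]
      constructor
      · rintro ⟨h₁, h₂⟩
        exact ⟨⟨(H.mem h₁).1.1, h₂⟩, H.push hc h₁ hk' hγ, relR_subset_wr_append h₂ γ⟩
      · rintro ⟨h₁, h₂, -⟩
        exact ⟨H.pull ⟨h₁.1, h₁.2.trans (wr_append_subset_s13 _ _)⟩ h₂, h₁.2⟩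

/-! ### The glued filter -/

/-- The glued filter is the upward closure of `{(αδ, U) : (δ, U) ∈ ξ, U ⊆ r(αδ)}`. -/
theorem GlueData.mem_filterOf (H : GlueData L α w ξ) (hwlr : L.WeaklyLeftResolving)
    (hc : L.ClosedUnderRelComplements) {p : Option (List A × Set V)} :
    p ∈ L.filterOf (wappend α w) (L.Jfamily α w (L.xiN w ξ)) ↔
      L.ESmem p ∧ ∃ δ U, some (δ, U) ∈ ξ ∧ U ⊆ L.wr (α ++ δ) ∧
        L.ESle (some (α ++ δ, U)) p := by
  refine and_congr_right fun hp => ?_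
  constructor
  · rintro ⟨n, hn, X, hX, hle⟩
    rcases le_total n α.length with h | h
    · rw [wtake_wappend_le α w h] at hle
      rw [H.mem_J_le hwlr hc h] at hX
      have hB := relR_mem_Bw hc hX.1 (α.drop n)
      have hE := ESle_relR (L := L) (α.take n) X (α.drop n)
      rw [List.take_append_drop] at hB hE
      refine ⟨[], L.relR X (α.drop n), hX.2, ?_, ?_⟩
      · rw [List.append_nil]; exact hB.2
      · rw [List.append_nil]; exact ESle_trans hE hle
    · obtain ⟨k, rfl⟩ := Nat.exists_eq_add_of_le h
      rw [wlen_wappend, Nat.cast_add] at hn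
      have hk := (ENat.add_le_add_iff_left (ENat.natCast_ne_top _)).1 hn
      rw [wtake_wappend_add] at hle
      rw [H.mem_J_add hwlr hc hk] at hX
      exact ⟨_, _, hX.1, hX.2, hle⟩
  · rintro ⟨δ, U, hU, hs, hle⟩
    obtain ⟨m, hm, rfl⟩ := H.word δ U hU
    refine ⟨α.length + m, ?_, U, (H.mem_J_add hwlr hc hm).2 ⟨hU, hs⟩, ?_⟩
    · rw [wlen_wappend, Nat.cast_add]
      exact add_le_add_right hm _
    · rwa [wtake_wappend_add]

theorem GlueData.isESFilter (H : GlueData L α w ξ) (hwlr : L.WeaklyLeftResolving)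
    (hc : L.ClosedUnderRelComplements) :
    L.IsESFilter (L.filterOf (wappend α w) (L.Jfamily α w (L.xiN w ξ))) := by
  have self : ∀ {δ U}, some (δ, U) ∈ ξ → U ⊆ L.wr (α ++ δ) →
      some (α ++ δ, U) ∈ L.filterOf (wappend α w) (L.Jfamily α w (L.xiN w ξ)) :=
    fun {δ U} h hs => (H.mem_filterOf hwlr hc).2
      ⟨⟨⟨(H.mem h).1.1, hs⟩, (H.mem h).2⟩, δ, U, h, hs, ESle_refl _⟩
  refine ⟨?_, ⟨_, self H.base (by rw [List.append_nil])⟩, ?_, ?_⟩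
  · rintro p hp
    obtain ⟨hm, δ, U, -, -, hle⟩ := (H.mem_filterOf hwlr hc).1 hp
    refine ⟨hm, ?_⟩
    rintro rfl
    exact hle
  · intro p hp q hq hpq
    obtain ⟨-, δ, U, h, hs, hle⟩ := (H.mem_filterOf hwlr hc).1 hp
    exact (H.mem_filterOf hwlr hc).2 ⟨hq, δ, U, h, hs, ESle_trans hle hpq⟩
  · intro p hp q hq
    obtain ⟨-, δ, U, h, hs, hle⟩ := (H.mem_filterOf hwlr hc).1 hp
    obtain ⟨-, δ', U', h', -, hle'⟩ := (H.mem_filterOf hwlr hc).1 hq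
    obtain ⟨z, hz, hz₁, hz₂⟩ := H.filt.2.2.2 _ h _ h'
    obtain _ | ⟨μ, S⟩ := z
    · exact ((H.filt.1 hz).2 rfl).elim
    refine ⟨some (α ++ μ, S), self hz ?_,
      ESle_trans ((ESle_append_iff α _ _ _ _).2 hz₁) hle,
      ESle_trans ((ESle_append_iff α _ _ _ _).2 hz₂) hle'⟩
    obtain ⟨γ, hγ, hS⟩ := hz₁
    simp only at hγ hS
    rw [hγ, ← List.append_assoc]
    exact hS.trans (relR_subset_wr_append hs γ)

/-- Below an element `(αδ, Y)` with `(δ, Y) ∈ ξ`, deleting `α` is an order isomorphism onto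
the elements below `(δ, Y)`; it carries a finite cover to a finite cover, to which tightness
of `ξ` applies. -/
theorem GlueData.isTight (H : GlueData L α w ξ) (hwlr : L.WeaklyLeftResolving)
    (hc : L.ClosedUnderRelComplements) (ht : L.IsTightESFilter ξ) :
    L.IsTightESFilter (L.filterOf (wappend α w) (L.Jfamily α w (L.xiN w ξ))) := by
  refine ⟨H.isESFilter hwlr hc, ?_⟩
  intro x hx Z hZ ⟨hZle, hZcov⟩
  obtain ⟨-, δ, Y, hY, hYs, hle⟩ := (H.mem_filterOf hwlr hc).1 hx
  have hx' : L.ESmem (some (α ++ δ, Y)) := ⟨⟨(H.mem hY).1.1, hYs⟩, (H.mem hY).2⟩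
  -- Meets with `(αδ, Y)` restrict the cover `Z` to a cover of `(αδ, Y)`; `α` is then deleted.
  let Z' : Set (Option (List A × Set V)) :=
    some '' ((fun p : List A × Set V => some (α ++ p.1, p.2)) ⁻¹'
      ((fun z => L.ESmul z (some (α ++ δ, Y))) '' Z))
  have hfin : Z'.Finite := by
    refine Set.Finite.image _ (Set.Finite.preimage ?_ (hZ.image _))
    rintro ⟨a, b⟩ - ⟨c, d⟩ - h
    simpa using h
  have hcov : L.ESCover (some (δ, Y)) Z' := by
    refine ⟨?_, ?_⟩
    · rintro _ ⟨⟨ε, U⟩, ⟨z, hz, hzU⟩, rfl⟩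
      obtain ⟨hm, -, hl⟩ := ESmul_lower hc (hZle z hz).1 hx'
      simp only at hzU
      rw [hzU] at hm hl
      exact ⟨⟨⟨hm.1.1, hm.1.2.trans (wr_append_subset_s13 _ _)⟩, hm.2⟩,
        (ESle_append_iff α _ _ _ _).1 hl⟩
    · rintro (_ | ⟨ε, W⟩) hW hWn hWle
      · exact (hWn rfl).elim
      have hy : L.ESmem (some (α ++ ε, W)) := by
        obtain ⟨γ, hγ, hs⟩ := hWle
        simp only at hγ hs
        refine ⟨⟨hW.1.1, ?_⟩, hW.2⟩
        rw [hγ, ← List.append_assoc]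
        exact hs.trans (relR_subset_wr_append hYs γ)
      have hyx := (ESle_append_iff (L := L) α _ _ _ _).2 hWle
      obtain ⟨z, hz, hne⟩ := hZcov _ hy (by simp) (ESle_trans hyx hle)
      obtain ⟨hu, hu₁, hu₂⟩ := ESmul_lower hc hy (hZle z hz).1
      -- `u` is a nonzero common lower bound of `(αε, W)` and `z`, hence below `z ∧ (αδ, Y)`.
      obtain ⟨⟨μ, S⟩, he⟩ := Option.ne_none_iff_exists'.1 hne
      rw [he] at hu hu₁ hu₂
      have hu₃ := ESle_ESmul hwlr hc hu (hZle z hz).1 hx' hu₂ (ESle_trans hu₁ hyx)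
      obtain ⟨-, -, hl⟩ := ESmul_lower hc (hZle z hz).1 hx'
      rcases hm : L.ESmul z (some (α ++ δ, Y)) with _ | ⟨κ, U⟩
      · rw [hm] at hu₃; exact hu₃.elim
      rw [hm] at hu₃ hl
      have hmemU : L.ESmem (some (κ, U)) := hm ▸ (ESmul_lower hc (hZle z hz).1 hx').1
      obtain ⟨γ, hγ, -⟩ := hl
      simp only [List.append_assoc] at hγ
      subst hγ
      obtain ⟨κ', hκ', -⟩ := id hu₁
      simp only [List.append_assoc] at hκ'
      subst hκ'
      refine ⟨some (δ ++ γ, U), ⟨(δ ++ γ, U), ⟨z, hz, hm⟩, rfl⟩, ?_⟩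
      have hle' := ESle_ESmul hwlr hc
        (u := some (ε ++ κ', S)) ⟨⟨hu.1.1, hu.1.2.trans (wr_append_subset_s13 _ _)⟩, hu.2⟩ hW
        (q := some (δ ++ γ, U)) ⟨⟨hmemU.1.1, hmemU.1.2.trans (wr_append_subset_s13 _ _)⟩, hmemU.2⟩
        ((ESle_append_iff α _ _ _ _).1 hu₁) ((ESle_append_iff α _ _ _ _).1 hu₃)
      intro h0
      rw [h0] at hle'
      exact hle'
  obtain ⟨_, ⟨⟨ε, U⟩, ⟨z, hz, hzU⟩, rfl⟩, hU⟩ := ht.2 _ hY Z' hfin hcov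
  obtain ⟨hm, hl, -⟩ := ESmul_lower hc (hZle z hz).1 hx'
  simp only at hzU
  rw [hzU] at hm hl
  exact ⟨z, hz, (H.mem_filterOf hwlr hc).2 ⟨(hZle z hz).1, ε, U, hU, hm.1.2, hl⟩⟩

end Glue

end LabelledSpace

section
variable {V Edg A : Type*} (L : LabelledSpace V Edg A)

/-- For a tight filter `ξ ∈ T_{(α)β}`, the glued family `{J_i}` is a complete family for
`αβ` and the filter in `E(S)` with word `αβ` associated with it is tight. -/
theorem glued_filter_tight (hwlr : L.WeaklyLeftResolving)
    (hc : L.ClosedUnderRelComplements)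
    (α : List A) (hα : α ≠ []) (hαl : L.IsLbl α)
    (w : LWord A) (hw : L.IsLWord w) (hαw : L.IsLWord (wappend α w))
    (ξ : Set (Option (List A × Set V))) (hξ : ξ ∈ L.TwP α w) :
    L.IsCompleteFamily (wappend α w) (L.Jfamily α w (L.xiN w ξ)) ∧
    L.IsTightESFilter (L.filterOf (wappend α w) (L.Jfamily α w (L.xiN w ξ))) := by
  have H := LabelledSpace.glueData_of_mem hα hξ
  have ht : L.IsTightESFilter ξ := by
    obtain _ | ⟨a, l⟩ := α
    · exact (hα rfl).elim
    · exact hξ.1.1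
  exact ⟨H.completeFamily hwlr hc, H.isTight hwlr hc ht⟩

end
end
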